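/- For every P ∈ 𝒫(Z) with u := P − Π_P ≠ 0, one has B̄(u) ≥ B(P,ℰ). -/

import Mathlib

/-!
The line through `P` in direction `u = P - Π_P` stays in the fibre `{Q | μ Q = μ P}` and passes
through `Π_P`, the minimizer of `H` on that fibre. Hence `Π_u(P) = Π_P`, so that `P ∈ 𝒫_u^+` and
`B_u(P) = H(P) - H(Π_P)` is one of the values whose supremum is `B̄(u)`.

It remains to see that `B(P, ℰ) ≤ H(P) - H(Π_P)`, which is convex duality. Separating the closed
convex set `{(μ(R), r) | H(R) ≤ r}` from the point `(μ(P), H(Π_P) - ε)` yields a `θ` for which the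
Lagrangian `H(R) + ⟨θ, μ(P) - μ(R)⟩` exceeds `H(Π_P) - ε` on the whole simplex. By the first-order
condition defining `P_θ`, the value of the Lagrangian at `P_θ` is `H(P) - B(P, P_θ)`.
-/

open Set
open scoped Pointwise

section ConvexDuality

theorem image_epigraph_eq_image_graph_add {V E : Type*} [AddMonoid E] (A : V → E) (H : V → ℝ)
    (K : Set V) :
    Prod.map A id '' {p : V × ℝ | p.1 ∈ K ∧ H p.1 ≤ p.2} =
      (fun R ↦ (A R, H R)) '' K + ({0} : Set E) ×ˢ Ici (0 : ℝ) := by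
  ext ⟨y, r⟩
  constructor
  · rintro ⟨⟨R, r⟩, ⟨hR, hle⟩, ⟨⟩⟩
    exact ⟨(A R, H R), mem_image_of_mem _ hR, (0, r - H R), by simpa using hle, by simp⟩
  · rintro ⟨_, ⟨R, hR, rfl⟩, ⟨_, s⟩, ⟨rfl, hs⟩, h⟩
    exact ⟨(R, H R + s), ⟨hR, le_add_of_nonneg_right hs⟩, by simpa using h⟩

theorem isClosed_image_epigraph {V E : Type*} [TopologicalSpace V] [AddGroup E]
    [TopologicalSpace E] [IsTopologicalAddGroup E] [T1Space E] {A : V → E} {H : V → ℝ} {K : Set V}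
    (hK : IsCompact K) (hA : ContinuousOn A K) (hH : ContinuousOn H K) :
    IsClosed (Prod.map A id '' {p : V × ℝ | p.1 ∈ K ∧ H p.1 ≤ p.2}) := by
  rw [image_epigraph_eq_image_graph_add]
  exact (isClosed_singleton.prod isClosed_Ici).add_left_of_isCompact
    (hK.image_of_continuousOn (hA.prodMk hH))

variable {V E : Type*} [AddCommGroup V] [Module ℝ V] [AddCommGroup E] [Module ℝ E]

/-- The loss of `ε` is unavoidable: where `H` has infinite slope at the boundary of `K`, an exact
multiplier need not exist. -/
theorem exists_dual_forall_sub_lt_of_forall_fiber_le [TopologicalSpace V] [TopologicalSpace E]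
    [IsTopologicalAddGroup E] [T1Space E] [ContinuousSMul ℝ E] [LocallyConvexSpace ℝ E]
    {K : Set V} {H : V → ℝ} {S : V} {y : E} {ε : ℝ} (hK : IsCompact K) (hHc : ContinuousOn H K)
    (hH : ConvexOn ℝ K H) (A : V →L[ℝ] E) (hS : S ∈ K) (hAS : A S = y)
    (hmin : ∀ Q ∈ K, A Q = y → H S ≤ H Q) (hε : 0 < ε) :
    ∃ φ : E →L[ℝ] ℝ, ∀ R ∈ K, H S - ε < H R + φ (y - A R) := by
  let C : Set (E × ℝ) := Prod.map A id '' {p : V × ℝ | p.1 ∈ K ∧ H p.1 ≤ p.2}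
  have hCconvex : Convex ℝ C :=
    hH.convex_epigraph.linear_image ((A : V →ₗ[ℝ] E).prodMap LinearMap.id)
  have hCclosed : IsClosed C := isClosed_image_epigraph hK A.continuous.continuousOn hHc
  have hnotMem : (y, H S - ε) ∉ C := by
    rintro ⟨⟨R, r⟩, ⟨hR, hle⟩, heq⟩
    obtain ⟨hAR, rfl⟩ := Prod.ext_iff.1 heq
    exact absurd ((hmin R hR hAR).trans hle) (by simpa using hε)
  obtain ⟨ψ, a, hψS, hψC⟩ := geometric_hahn_banach_point_closed hCconvex hCclosed hnotMem
  have hψ : ∀ y r, ψ (y, r) = ψ (y, 0) + r * ψ (0, 1) := fun y r ↦ by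
    rw [← smul_eq_mul, ← map_smul, ← map_add]; simp
  have hsep : ∀ R ∈ K, ψ (y, 0) + (H S - ε) * ψ (0, 1) < ψ (A R, 0) + H R * ψ (0, 1) :=
    fun R hR ↦ by
      rw [← hψ, ← hψ]
      exact hψS.trans (hψC _ ⟨(R, H R), ⟨hR, le_rfl⟩, rfl⟩)
  have hpos : 0 < ψ (0, 1) := by
    have hsepS := hsep S hS
    rw [hAS] at hsepS
    exact pos_of_mul_pos_right (by linarith : 0 < ε * ψ (0, 1)) hε.le
  refine ⟨-((ψ (0, 1))⁻¹ • ψ.comp (.inl ℝ E ℝ)), fun R hR ↦ ?_⟩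
  have hsepR := hsep R hR
  simp only [neg_apply, smul_apply, ContinuousLinearMap.comp_apply,
    ContinuousLinearMap.inl_apply, map_sub, smul_eq_mul]
  rw [← mul_lt_mul_iff_left₀ hpos]
  field_simp
  linarith

theorem eq_of_forall_fiber_le_of_mem_line {K : Set V} {H : V → ℝ} (hH : StrictConvexOn ℝ K H)
    (A : V →ₗ[ℝ] E) {P S T : V} {t : ℝ} (hS : S ∈ K) (hAS : A S = A P)
    (hmin : ∀ Q ∈ K, A Q = A P → H S ≤ H Q) (hT : T ∈ K) (hline : T - P = t • (P - S))
    (hle : H T ≤ H S) : T = S := by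
  have hAT : A T = A P := by
    rw [eq_add_of_sub_eq hline]
    simp [hAS]
  have hfiber : Convex ℝ (K ∩ A ⁻¹' {A P}) :=
    hH.1.inter ((convex_singleton (A P)).linear_preimage A)
  exact (hH.subset inter_subset_left hfiber).eq_of_isMinOn
    (fun Q hQ ↦ hle.trans (hmin Q hQ.1 hQ.2)) (fun Q hQ ↦ hmin Q hQ.1 hQ.2) ⟨hT, hAT⟩ ⟨hS, hAS⟩

end ConvexDuality

section ConvexFunctionsOnTheLine

theorem strictConvexOn_of_interior {D : Set ℝ} {g : ℝ → ℝ} (hD : Convex ℝ D)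
    (hgc : ContinuousOn g D) (hg : StrictConvexOn ℝ (interior D) g)
    (hgd : ∀ x ∈ interior D, DifferentiableAt ℝ g x) : StrictConvexOn ℝ D g :=
  (hg.strictMonoOn_deriv hgd).strictConvexOn_of_deriv hD hgc

theorem mul_sub_le_sub_of_convexOn_of_hasDerivAt {D : Set ℝ} {g : ℝ → ℝ} {x y g' : ℝ}
    (hg : ConvexOn ℝ D g) (hx : x ∈ D) (hy : y ∈ D) (hgx : HasDerivAt g g' x) :
    g' * (y - x) ≤ g y - g x := by
  rcases lt_trichotomy x y with hxy | rfl | hyx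
  · have := hg.le_slope_of_hasDerivAt hx hy hxy hgx
    rwa [slope_def_field, le_div_iff₀ (sub_pos.2 hxy)] at this
  · simp
  · have := hg.slope_le_of_hasDerivAt hy hx hyx hgx
    rw [slope_def_field, div_le_iff₀ (sub_pos.2 hyx)] at this
    linarith

end ConvexFunctionsOnTheLine

theorem sub_comp_le_sSup_image_closure {X : Type*} [TopologicalSpace X] [T2Space X] {K C : Set X}
    {H : X → ℝ} {T : X → X} {P : X} (hK : IsCompact K) (hH : ContinuousOn H K)
    (hT : MapsTo T K K) (hC : C ⊆ K) (hP : P ∈ C) :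
    H P - H (T P) ≤ sSup ((fun Q ↦ H Q - H (T Q)) '' closure C) := by
  have hclosure : closure C ⊆ K := closure_minimal hC hK.isClosed
  obtain ⟨M, hM⟩ := hK.bddAbove_image hH
  obtain ⟨m, hm⟩ := hK.bddBelow_image hH
  have hbdd : M - m ∈ upperBounds ((fun Q ↦ H Q - H (T Q)) '' closure C) :=
    forall_mem_image.2 fun Q hQ ↦ sub_le_sub (hM (mem_image_of_mem H (hclosure hQ)))
      (hm (mem_image_of_mem H (hT (hclosure hQ))))
  exact le_csSup ⟨_, hbdd⟩ (mem_image_of_mem _ (subset_closure hP))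

theorem exists_forall_eq_sum_mul {n : Type*} [Fintype n] (φ : (n → ℝ) →ₗ[ℝ] ℝ) :
    ∃ θ : n → ℝ, ∀ y, φ y = ∑ i, θ i * y i := by
  classical
  obtain ⟨θ, rfl⟩ := (dotProductEquiv ℝ n).surjective φ
  exact ⟨θ, fun _ ↦ rfl⟩

section Bregman

variable {Z : Type*} [Fintype Z]

/-- The separable convex function `H(Q) = ∑ z, β z (Q z)`, the negative of a generalized
entropy. -/
def separableEntropy (β : Z → ℝ → ℝ) (Q : Z → ℝ) : ℝ :=
  ∑ z, β z (Q z)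

/-- The Bregman divergence `B(P, Q)` of `separableEntropy β`. The derivatives of the `β z` are
passed as the separate argument `β'`. -/
def bregmanDiv (β β' : Z → ℝ → ℝ) (P Q : Z → ℝ) : ℝ :=
  ∑ z, (β z (P z) - β z (Q z) - β' z (Q z) * (P z - Q z))

/-- The Bregman family `θ ↦ P_θ` with statistic `f`. Here `e z` stands for the inverse of the
derivative of `β z`, and `Λ` for the normalization making each member sum to `1`. -/
def bregmanFamily {n : Type*} [Fintype n] (e : Z → ℝ → ℝ) (f : Z → n → ℝ) (Λ : (n → ℝ) → ℝ)
    (θ : n → ℝ) (z : Z) : ℝ :=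
  e z ((∑ i, θ i * f z i) - Λ θ)

variable {β β' : Z → ℝ → ℝ}

theorem continuousOn_separableEntropy {s : Z → Set ℝ} (hβ : ∀ z, ContinuousOn (β z) (s z)) :
    ContinuousOn (separableEntropy β) (univ.pi s) :=
  continuousOn_finsetSum _ fun z _ ↦
    (hβ z).comp (continuous_apply z).continuousOn fun _ hQ ↦ hQ z (mem_univ z)

theorem convexOn_separableEntropy {s : Z → Set ℝ} (hβ : ∀ z, ConvexOn ℝ (s z) (β z)) :
    ConvexOn ℝ (univ.pi s) (separableEntropy β) := by
  refine ⟨convex_pi fun z _ ↦ (hβ z).1, fun P hP Q hQ a b ha hb hab ↦ ?_⟩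
  simp only [separableEntropy, smul_eq_mul, Finset.mul_sum, ← Finset.sum_add_distrib]
  exact Finset.sum_le_sum fun z _ ↦ (hβ z).2 (hP z trivial) (hQ z trivial) ha hb hab

theorem strictConvexOn_separableEntropy {s : Z → Set ℝ}
    (hβ : ∀ z, StrictConvexOn ℝ (s z) (β z)) :
    StrictConvexOn ℝ (univ.pi s) (separableEntropy β) := by
  refine ⟨convex_pi fun z _ ↦ (hβ z).1, fun P hP Q hQ hPQ a b ha hb hab ↦ ?_⟩
  obtain ⟨z₀, hz₀⟩ := Function.ne_iff.1 hPQ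
  simp only [separableEntropy, smul_eq_mul, Finset.mul_sum, ← Finset.sum_add_distrib]
  exact Finset.sum_lt_sum
    (fun z _ ↦ (hβ z).convexOn.2 (hP z trivial) (hQ z trivial) ha.le hb.le hab)
    ⟨z₀, Finset.mem_univ z₀, (hβ z₀).2 (hP z₀ trivial) (hQ z₀ trivial) hz₀ ha hb hab⟩

theorem stdSimplex_subset_pi_Ici : stdSimplex ℝ Z ⊆ univ.pi fun _ ↦ Ici 0 :=
  fun _ hQ z _ ↦ hQ.1 z

theorem bregmanDiv_nonneg {s : Z → Set ℝ} {P Q : Z → ℝ} (hβ : ∀ z, ConvexOn ℝ (s z) (β z))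
    (hP : ∀ z, P z ∈ s z) (hQ : ∀ z, Q z ∈ s z)
    (hβ' : ∀ z, HasDerivAt (β z) (β' z (Q z)) (Q z)) : 0 ≤ bregmanDiv β β' P Q :=
  Finset.sum_nonneg fun z _ ↦ sub_nonneg.2
    (mul_sub_le_sub_of_convexOn_of_hasDerivAt (hβ z) (hQ z) (hP z) (hβ' z))

theorem bregmanDiv_eq_of_forall_eq_sub {E : Type*} [AddCommGroup E] [Module ℝ E] {f : Z → E}
    {P Q : Z → ℝ} {r : ℝ} (φ : E →ₗ[ℝ] ℝ) (hsum : ∑ z, P z = ∑ z, Q z)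
    (hQ : ∀ z, β' z (Q z) = φ (f z) - r) :
    bregmanDiv β β' P Q = separableEntropy β P - separableEntropy β Q
      - φ (Fintype.linearCombination ℝ f P - Fintype.linearCombination ℝ f Q) := by
  have hlin : φ (Fintype.linearCombination ℝ f P - Fintype.linearCombination ℝ f Q) =
      ∑ z, φ (f z) * (P z - Q z) := by
    rw [← map_sub]
    simp [Fintype.linearCombination_apply, mul_comm]
  have hconst : ∑ z, r * (P z - Q z) = 0 := by
    rw [← Finset.mul_sum, Finset.sum_sub_distrib, hsum, sub_self, mul_zero]
  simp only [bregmanDiv, hQ, sub_mul, Finset.sum_sub_distrib, hlin, hconst, sub_zero,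
    separableEntropy]

theorem exists_dual_forall_bregmanDiv_lt {E : Type*} [AddCommGroup E] [Module ℝ E]
    [TopologicalSpace E] [IsTopologicalAddGroup E] [T1Space E] [ContinuousSMul ℝ E]
    [LocallyConvexSpace ℝ E] {f : Z → E} {P S : Z → ℝ} {ε : ℝ}
    (hHc : ContinuousOn (separableEntropy β) (stdSimplex ℝ Z))
    (hH : ConvexOn ℝ (stdSimplex ℝ Z) (separableEntropy β))
    (hP : P ∈ stdSimplex ℝ Z) (hS : S ∈ stdSimplex ℝ Z)
    (hSP : Fintype.linearCombination ℝ f S = Fintype.linearCombination ℝ f P)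
    (hmin : ∀ Q ∈ stdSimplex ℝ Z,
      Fintype.linearCombination ℝ f Q = Fintype.linearCombination ℝ f P →
        separableEntropy β S ≤ separableEntropy β Q) (hε : 0 < ε) :
    ∃ φ : E →L[ℝ] ℝ, ∀ Q ∈ stdSimplex ℝ Z, ∀ r, (∀ z, β' z (Q z) = φ (f z) - r) →
      bregmanDiv β β' P Q < separableEntropy β P - separableEntropy β S + ε := by
  obtain ⟨φ, hφ⟩ := exists_dual_forall_sub_lt_of_forall_fiber_le (isCompact_stdSimplex ℝ Z)
    hHc hH (Fintype.linearCombination ℝ f).toContinuousLinearMap hS hSP hmin hε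
  refine ⟨φ, fun Q hQ r hgrad ↦ ?_⟩
  have hlagrange : separableEntropy β S - ε < separableEntropy β Q +
      φ (Fintype.linearCombination ℝ f P - Fintype.linearCombination ℝ f Q) := hφ Q hQ
  calc bregmanDiv β β' P Q
      = separableEntropy β P - separableEntropy β Q -
          φ (Fintype.linearCombination ℝ f P - Fintype.linearCombination ℝ f Q) :=
        bregmanDiv_eq_of_forall_eq_sub φ.toLinearMap (hP.2.trans hQ.2.symm) hgrad
    _ < separableEntropy β P - separableEntropy β S + ε := by linarith

theorem iInf_bregmanDiv_bregmanFamily_le {n : Type*} [Fintype n] {e : Z → ℝ → ℝ} {f : Z → n → ℝ}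
    {Λ : (n → ℝ) → ℝ} {P S : Z → ℝ} (hβc : ∀ z, ContinuousOn (β z) (Ici 0))
    (hβ : ∀ z, ConvexOn ℝ (Ici 0) (β z)) (hβ' : ∀ z x, 0 < x → HasDerivAt (β z) (β' z x) x)
    (he_pos : ∀ z r, 0 < e z r) (he : ∀ z r, β' z (e z r) = r)
    (hΛ : ∀ θ, ∑ z, bregmanFamily e f Λ θ z = 1)
    (hP : P ∈ stdSimplex ℝ Z) (hS : S ∈ stdSimplex ℝ Z)
    (hSP : Fintype.linearCombination ℝ f S = Fintype.linearCombination ℝ f P)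
    (hmin : ∀ Q ∈ stdSimplex ℝ Z,
      Fintype.linearCombination ℝ f Q = Fintype.linearCombination ℝ f P →
        separableEntropy β S ≤ separableEntropy β Q) :
    ⨅ θ, bregmanDiv β β' P (bregmanFamily e f Λ θ) ≤
      separableEntropy β P - separableEntropy β S := by
  have hbdd : BddBelow (range fun θ ↦ bregmanDiv β β' P (bregmanFamily e f Λ θ)) :=
    ⟨0, forall_mem_range.2 fun θ ↦ bregmanDiv_nonneg hβ hP.1 (fun z ↦ (he_pos z _).le)
      fun z ↦ hβ' z _ (he_pos z _)⟩
  refine le_of_forall_pos_le_add fun ε hε ↦ ?_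
  obtain ⟨φ, hφ⟩ := exists_dual_forall_bregmanDiv_lt (β' := β')
    ((continuousOn_separableEntropy hβc).mono stdSimplex_subset_pi_Ici)
    ((convexOn_separableEntropy hβ).subset stdSimplex_subset_pi_Ici (convex_stdSimplex ℝ Z))
    hP hS hSP hmin hε
  obtain ⟨θ, hθ⟩ := exists_forall_eq_sum_mul φ.toLinearMap
  have hgrad : ∀ z, β' z (bregmanFamily e f Λ θ z) = φ (f z) - Λ θ := fun z ↦
    (he z _).trans (congrArg (· - Λ θ) (hθ (f z)).symm)
  exact (ciInf_le hbdd θ).trans (hφ _ ⟨fun z ↦ (he_pos z _).le, hΛ θ⟩ _ hgrad).le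

end Bregman


theorem stmt_14 {Z : Type} [Fintype Z] [Nonempty Z] {d : ℕ}
    (β β' : Z → ℝ → ℝ)
    (hβc : ∀ z, ContinuousOn (β z) (Set.Ici 0))
    (hβsc : ∀ z, StrictConvexOn ℝ (Set.Ioi 0) (β z))
    (hβd : ∀ z x, 0 < x → HasDerivAt (β z) (β' z x) x)
    (hβ'bot : ∀ z, Filter.Tendsto (β' z) (nhdsWithin 0 (Set.Ioi 0)) Filter.atBot)
    (hβ'top : ∀ z, Filter.Tendsto (β' z) Filter.atTop Filter.atTop)
    (e : Z → ℝ → ℝ)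
    (he_pos : ∀ z r, 0 < e z r)
    (he_left : ∀ z r, β' z (e z r) = r)
    (he_right : ∀ z x, 0 < x → e z (β' z x) = x)
    (f : Z → Fin d → ℝ)
    (prob : Set (Z → ℝ))
    (hprob : prob = {P : Z → ℝ | (∀ z, 0 ≤ P z) ∧ (∑ z, P z) = 1})
    (μ : (Z → ℝ) → Fin d → ℝ)
    (hμ : ∀ P i, μ P i = ∑ z, P z * f z i)
    (H : (Z → ℝ) → ℝ)
    (hH : ∀ Q, H Q = ∑ z, β z (Q z))
    (Λ : (Fin d → ℝ) → ℝ)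
    (hΛ : ∀ θ, (∑ z, e z ((∑ i, θ i * f z i) - Λ θ)) = 1)
    (Pθ : (Fin d → ℝ) → Z → ℝ)
    (hPθ : ∀ θ z, Pθ θ z = e z ((∑ i, θ i * f z i) - Λ θ))
    (Bdiv : (Z → ℝ) → (Z → ℝ) → ℝ)
    (hBdiv : ∀ P Q, Bdiv P Q = ∑ z, (β z (P z) - β z (Q z) - β' z (Q z) * (P z - Q z)))
    (BE : (Z → ℝ) → ℝ)
    (hBE : ∀ P, BE P = ⨅ θ, Bdiv P (Pθ θ))
    (Pr : (Z → ℝ) → Z → ℝ)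
    (hPr : ∀ P ∈ prob, Pr P ∈ prob ∧ μ (Pr P) = μ P ∧
      (∀ Q ∈ prob, μ Q = μ P → H (Pr P) ≤ H Q) ∧
      (∀ Q ∈ prob, μ Q = μ P → H Q = H (Pr P) → Q = Pr P))
    (Pru : (Z → ℝ) → (Z → ℝ) → Z → ℝ)
    (hPru : ∀ u : Z → ℝ, (∑ z, u z) = 0 → u ≠ 0 → ∀ Q ∈ prob,
      Pru u Q ∈ prob ∧ (∃ t : ℝ, ∀ z, Pru u Q z - Q z = t * u z) ∧
      (∀ R ∈ prob, (∃ t : ℝ, ∀ z, R z - Q z = t * u z) → H (Pru u Q) ≤ H R) ∧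
      (∀ R ∈ prob, (∃ t : ℝ, ∀ z, R z - Q z = t * u z) → H R = H (Pru u Q) → R = Pru u Q))
    (Pplus : (Z → ℝ) → Set (Z → ℝ))
    (hPplus : ∀ u, Pplus u = {Q | Q ∈ prob ∧ 0 < ∑ z, (Q z - Pru u Q z) * u z})
    (Bu : (Z → ℝ) → (Z → ℝ) → ℝ)
    (hBu : ∀ u Q, Bu u Q = H Q - H (Pru u Q))
    (Bbar : (Z → ℝ) → ℝ)
    (hBbar : ∀ u, Bbar u = sSup (Bu u '' closure (Pplus u)))
    (P : Z → ℝ) (hP : P ∈ prob)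
    (hne : P - Pr P ≠ 0) :
    BE P ≤ Bbar (P - Pr P) := by
  obtain rfl : prob = stdSimplex ℝ Z := hprob
  obtain rfl : H = separableEntropy β := funext hH
  obtain rfl : μ = Fintype.linearCombination ℝ f := by
    ext Q i
    simp [hμ, Fintype.linearCombination_apply]
  obtain rfl : Bdiv = bregmanDiv β β' := funext₂ hBdiv
  obtain rfl : Pθ = bregmanFamily e f Λ := funext₂ hPθ
  have hβ : ∀ z, StrictConvexOn ℝ (Ici 0) (β z) := fun z ↦
    strictConvexOn_of_interior (convex_Ici 0) (hβc z) (by simpa using hβsc z)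
      fun x hx ↦ (hβd z x (by simpa using hx)).differentiableAt
  obtain ⟨hS, hSP, hmin, -⟩ := hPr P hP
  have hu := hPru (P - Pr P) (by simp [hP.2, hS.2]) hne
  have hproj : Pru (P - Pr P) P = Pr P := by
    obtain ⟨hT, ⟨t, ht⟩, hTmin, -⟩ := hu P hP
    exact eq_of_forall_fiber_le_of_mem_line ((strictConvexOn_separableEntropy hβ).subset
      stdSimplex_subset_pi_Ici (convex_stdSimplex ℝ Z)) _ hS hSP hmin hT (funext ht)
      (hTmin _ hS ⟨-1, fun z ↦ by simp⟩)
  have hPmem : P ∈ Pplus (P - Pr P) := by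
    rw [hPplus, mem_ofPred_eq, hproj]
    exact ⟨hP, Matrix.dotProduct_star_self_pos_iff.2 hne⟩
  calc BE P = ⨅ θ, bregmanDiv β β' P (bregmanFamily e f Λ θ) := hBE P
    _ ≤ separableEntropy β P - separableEntropy β (Pr P) :=
      iInf_bregmanDiv_bregmanFamily_le hβc (fun z ↦ (hβ z).convexOn) hβd he_pos he_left hΛ
        hP hS hSP hmin
    _ = separableEntropy β P - separableEntropy β (Pru (P - Pr P) P) := by rw [hproj]
    _ ≤ Bbar (P - Pr P) := by
      rw [hBbar, funext (hBu _)]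
      exact sub_comp_le_sSup_image_closure (isCompact_stdSimplex ℝ Z)
        ((continuousOn_separableEntropy hβc).mono stdSimplex_subset_pi_Ici)
        (fun Q hQ ↦ (hu Q hQ).1) (by rw [hPplus]; exact fun Q hQ ↦ hQ.1) hPmem
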